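/- Let g₁, g₂ : ℂ × ℂ → ℂ be smooth functions with compact support satisfying the compatibility condition ∂̄₂g₁ = ∂̄₁g₂ on all of ℂ² (i.e. the (0,1)-form g₁ dz̄₁ + g₂ dz̄₂ is ∂̄-closed). Then there exists a unique smooth function f : ℂ × ℂ → ℂ with compact support such that ∂̄₁f = g₁ and ∂̄₂f = g₂ on ℂ². (Existence expresses H¹_c(ℂ², 𝒪) = 0, and uniqueness expresses H⁰_c(ℂ², 𝒪) = 0; both are used in the paper's long exact sequence computing H¹_c(ℂ²∖{(0,0)}, 𝒪).) -/

import Mathlib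

/-!
The solution is the Cauchy transform of `g₁` in the first variable,
`f(z₁, z₂) = π⁻¹ ∫ g₁(z₁ - t, z₂) / t dA(t)`. Since `1 / t` is locally integrable on `ℂ`
(`locallyIntegrable_inv`), `f` is smooth and the transform commutes with `∂̄₁` and `∂̄₂`
(`dbar1_cauchyTransform`, `dbar2_cauchyTransform`). The Cauchy–Pompeiu formula
(`cauchyTransform_dbar1`) says that a compactly supported smooth function is the Cauchy transform of
its `∂̄₁`-derivative. Hence `∂̄₁f = g₁`, and, as the form is closed, `∂̄₂f` is the transform of
`∂̄₂g₁ = ∂̄₁g₂`, which is `g₂`. The same formula gives uniqueness, because a solution `u` must be the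
transform of `∂̄₁u = g₁`.

Let `K₁` be the projection of the support of `g₂` to the first axis and `K₂` that of the support of
`g₁` to the second axis. For `z₂ ∉ K₂` the integrand is zero, so `f(z₁, z₂) = 0`. For `z₁ ∉ K₁` the
function `f(z₁, ·)` satisfies `∂̄₂f(z₁, ·) = g₂(z₁, ·) = 0`, so it is entire, and it vanishes outside
`K₂`, so it is zero by Liouville's theorem (`eq_zero_of_entire_of_compactSupport`). Therefore `f` is
supported in `K₁ × K₂`.
-/

open MeasureTheory Complex

/-- The Wirtinger derivative with respect to `z̄₁` of a function on `ℂ²`. -/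
noncomputable def dbar1 (f : ℂ × ℂ → ℂ) (p : ℂ × ℂ) : ℂ :=
  (1 / 2 : ℂ) * ((fderiv ℝ (fun w => f (w, p.2)) p.1) 1 +
    Complex.I • (fderiv ℝ (fun w => f (w, p.2)) p.1) Complex.I)

/-- The Wirtinger derivative with respect to `z̄₂` of a function on `ℂ²`. -/
noncomputable def dbar2 (f : ℂ × ℂ → ℂ) (p : ℂ × ℂ) : ℂ :=
  (1 / 2 : ℂ) * ((fderiv ℝ (fun w => f (p.1, w)) p.2) 1 +
    Complex.I • (fderiv ℝ (fun w => f (p.1, w)) p.2) Complex.I)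

open scoped Convolution Real

/-- A function on `ℂ` with compact support and vanishing `∂̄` is zero: by the Cauchy–Riemann equations
it is entire, and it tends to `0` at infinity, so Liouville's theorem applies. -/
theorem eq_zero_of_entire_of_compactSupport {h : ℂ → ℂ} (hd : Differentiable ℝ h)
    (hc : HasCompactSupport h)
    (hbar : ∀ z, (1 / 2 : ℂ) * ((fderiv ℝ h z) 1 + Complex.I • (fderiv ℝ h z) Complex.I) = 0)
    (z : ℂ) : h z = 0 := by
  have hC : Differentiable ℂ h := by
    intro w
    rw [differentiableAt_complex_iff_differentiableAt_real]
    refine ⟨hd w, ?_⟩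
    have := hbar w
    simp only [smul_eq_mul] at this ⊢
    linear_combination (-2 * Complex.I) * this + (fderiv ℝ h w) Complex.I * Complex.I_sq
  exact hC.apply_eq_of_tendsto_cocompact z hc.is_zero_at_infty

/-- In polar coordinates the area form `r dr dθ` compensates the singularity of `1 / w` at `0`. -/
theorem locallyIntegrable_inv : LocallyIntegrable (fun w : ℂ => w⁻¹) := by
  rw [MeasureTheory.locallyIntegrable_iff]
  intro K hK
  obtain ⟨R, hR⟩ := hK.isBounded.subset_closedBall 0
  refine IntegrableOn.mono_set (t := Metric.closedBall 0 R) ?_ hR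
  rw [← integrable_indicator_iff measurableSet_closedBall]
  refine ⟨(measurable_inv.indicator measurableSet_closedBall).aestronglyMeasurable, ?_⟩
  unfold HasFiniteIntegral
  rw [← Complex.lintegral_comp_polarCoord_symm]
  calc _ ≤ ∫⁻ p in polarCoord.target, (Set.Iic R ×ˢ Set.univ).indicator (fun _ => (1 : ENNReal)) p := by
        refine setLIntegral_mono_ae' polarCoord.open_target.measurableSet (Filter.Eventually.of_forall ?_)
        intro p hp
        have hp1 : 0 < p.1 := hp.1
        by_cases h : p.1 ≤ R
        · have h2 : p ∈ Set.Iic R ×ˢ (Set.univ : Set ℝ) := ⟨h, trivial⟩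
          have h1 : Complex.polarCoord.symm p ∈ Metric.closedBall (0 : ℂ) R := by
            rw [mem_closedBall_zero_iff, Complex.norm_polarCoord_symm, abs_of_pos hp1]; exact h
          rw [Set.indicator_of_mem h1, Set.indicator_of_mem h2, enorm_inv, ← ofReal_norm,
            Complex.norm_polarCoord_symm, abs_of_pos hp1, smul_eq_mul,
            ENNReal.mul_inv_cancel (by simpa using hp1) (by simp)]
          intro h0
          have := Complex.norm_polarCoord_symm p
          rw [h0, abs_of_pos hp1] at this
          simp at this; linarith
        · have h1 : Complex.polarCoord.symm p ∉ Metric.closedBall (0 : ℂ) R := by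
            rw [mem_closedBall_zero_iff, Complex.norm_polarCoord_symm, abs_of_pos hp1]; exact h
          rw [Set.indicator_of_notMem h1]
          simp
    _ ≤ volume (Set.Ioc 0 R ×ˢ Set.Ioo (-π) π) := by
        rw [lintegral_indicator_const (measurableSet_Iic.prod MeasurableSet.univ), one_mul,
          Measure.restrict_apply (measurableSet_Iic.prod MeasurableSet.univ)]
        refine measure_mono ?_
        rintro p ⟨hp, hq⟩
        exact ⟨⟨hq.1, hp.1⟩, hq.2⟩
    _ < ⊤ := by
        rw [Measure.volume_eq_prod, Measure.prod_prod]
        simp [ENNReal.mul_lt_top_iff]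

/-- The Cauchy–Pompeiu formula at the origin: `∫ ∂̄k(w) / w dA(w) = -π k(0)` for `k` of class `C¹`
with compact support. In polar coordinates the Jacobian `r` cancels the singularity, and the
integrand becomes `(A + i B) / 2`, where `A` is the radial derivative of `k` and `B` is `1 / r` times
its angular derivative. Integrating `A` along rays gives `-k(0)` for each angle; integrating `B`
over circles gives `0`. -/
theorem integral_inv_mul_dbar {k : ℂ → ℂ} (hk : ContDiff ℝ 1 k) (hc : HasCompactSupport k) :
    ∫ w, w⁻¹ * ((1 / 2 : ℂ) * ((fderiv ℝ k w) 1 + Complex.I • (fderiv ℝ k w) Complex.I)) =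
      -π * k 0 := by
  set e : ℝ → ℂ := fun θ => Real.cos θ + Real.sin θ * Complex.I with he
  have hee : ∀ θ, e θ * (Real.cos θ - Real.sin θ * Complex.I) = 1 := by
    intro θ
    have := Complex.sin_sq_add_cos_sq θ
    simp only [he, Complex.ofReal_cos, Complex.ofReal_sin]
    linear_combination this - Complex.sin θ ^ 2 * Complex.I_sq
  have hecont : Continuous e := by fun_prop
  have hed : ∀ θ, HasDerivAt e (Complex.I * e θ) θ := by
    intro θ
    have h1 := (Real.hasDerivAt_cos θ).ofReal_comp
    have h2 := ((Real.hasDerivAt_sin θ).ofReal_comp).mul_const Complex.I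
    refine (h1.add h2).congr_deriv ?_
    simp only [he]; push_cast
    linear_combination - Complex.sin θ * Complex.I_sq
  have hkd : ∀ w, HasFDerivAt k (fderiv ℝ k w) w := fun w =>
    (hk.differentiable one_ne_zero w).hasFDerivAt
  have hDk : Continuous (fderiv ℝ k) := hk.continuous_fderiv one_ne_zero
  set A : ℝ × ℝ → ℂ := fun p => fderiv ℝ k (p.1 * e p.2) (e p.2) with hA
  set B : ℝ × ℝ → ℂ := fun p => fderiv ℝ k (p.1 * e p.2) (Complex.I * e p.2) with hB
  have hAc : Continuous A := by
    refine (hDk.comp ?_).clm_apply ?_ <;> fun_prop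
  have hBc : Continuous B := by
    refine (hDk.comp ?_).clm_apply ?_ <;> fun_prop
  obtain ⟨R, hR⟩ := hc.isCompact.isBounded.subset_closedBall 0
  have hnorm : ∀ θ, ‖e θ‖ = 1 := fun θ => by simp [he]
  have hz : ∀ r θ, R < r → (r * e θ : ℂ) ∉ tsupport k := by
    intro r θ h hmem
    have := hR hmem
    rw [mem_closedBall_zero_iff, norm_mul, hnorm, mul_one, Complex.norm_real] at this
    exact absurd ((le_abs_self r).trans this) (not_le.2 h)
  have hzD : ∀ r θ, R < r → fderiv ℝ k (r * e θ) = 0 := fun r θ h =>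
    image_eq_zero_of_notMem_tsupport (fun hm => hz r θ h (tsupport_fderiv_subset ℝ hm))
  -- `A` and `B` are continuous up to `r = 0` and vanish for `r > R`, which makes both integrable
  -- on the polar domain and allows Fubini's theorem in either order.
  have integrable_of_vanish : ∀ C : ℝ × ℝ → ℂ, Continuous C → (∀ p : ℝ × ℝ, R < p.1 → C p = 0) →
      IntegrableOn C (Set.Ioi 0 ×ˢ Set.Ioo (-π) π) := by
    intro C hC hC0
    have h1 : IntegrableOn C (Set.Icc 0 R ×ˢ Set.Icc (-π) π) :=
      hC.continuousOn.integrableOn_compact (isCompact_Icc.prod isCompact_Icc)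
    refine h1.of_forall_sdiff_eq_zero (measurableSet_Ioi.prod measurableSet_Ioo) ?_
    rintro p ⟨hp, hq⟩
    refine hC0 p (not_le.1 fun h => hq ⟨⟨hp.1.le, h⟩, Set.Ioo_subset_Icc_self hp.2⟩)
  have hAi := integrable_of_vanish A hAc (fun p hp => by simp [hA, hzD _ _ hp])
  have hBi := integrable_of_vanish B hBc (fun p hp => by simp [hB, hzD _ _ hp])
  -- For fixed `r`, `B` is the `θ`-derivative of the `2π`-periodic function `r⁻¹ k(r e^{iθ})`.
  have hBint : ∫ p in Set.Ioi (0 : ℝ) ×ˢ Set.Ioo (-π) π, B p = 0 := by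
    rw [Measure.volume_eq_prod] at hBi ⊢
    rw [setIntegral_prod _ hBi]
    refine setIntegral_eq_zero_of_forall_eq_zero fun r hr => ?_
    have hr0 : (r : ℂ) ≠ 0 := by exact_mod_cast (ne_of_gt hr)
    rw [← integral_Ioc_eq_integral_Ioo,
      ← intervalIntegral.integral_of_le (by linarith [Real.pi_pos])]
    have hd : ∀ θ ∈ Set.uIcc (-π) π,
        HasDerivAt (fun θ => (r : ℂ)⁻¹ * k (r * e θ)) (B (r, θ)) θ := by
      intro θ _
      have h1 := (((hkd (r * e θ)).comp_hasDerivAt θ ((hed θ).const_mul (r : ℂ)))).const_mul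
        ((r : ℂ)⁻¹)
      refine h1.congr_deriv ?_
      have : (r : ℂ) * (Complex.I * e θ) = r • (Complex.I * e θ) := by simp
      rw [this, map_smul, Complex.real_smul, ← mul_assoc, inv_mul_cancel₀ hr0, one_mul]
    rw [intervalIntegral.integral_eq_sub_of_hasDerivAt hd
      ((hBc.comp (by fun_prop : Continuous fun θ : ℝ => (r, θ))).intervalIntegrable _ _)]
    simp [he]
  -- For fixed `θ`, `A` is the `r`-derivative of `k(r e^{iθ})`.
  have hAint : ∫ p in Set.Ioi (0 : ℝ) ×ˢ Set.Ioo (-π) π, A p = -(2 * π) * k 0 := by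
    rw [Measure.volume_eq_prod] at hAi ⊢
    rw [IntegrableOn, ← Measure.prod_restrict] at hAi
    rw [← Measure.prod_restrict, integral_prod_symm _ hAi]
    have h1 : ∀ θ : ℝ, ∫ r in Set.Ioi (0 : ℝ), A (r, θ) = - k 0 := by
      intro θ
      have hcd : ContDiff ℝ 1 (fun r : ℝ => k (r * e θ)) :=
        hk.comp ((Complex.ofRealCLM.contDiff).mul contDiff_const)
      have hcs : HasCompactSupport (fun r : ℝ => k (r * e θ)) := by
        refine HasCompactSupport.intro (K := Set.Icc (-R) R) isCompact_Icc fun r hr => ?_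
        refine image_eq_zero_of_notMem_tsupport fun hm => hr ?_
        have := hR hm
        rw [mem_closedBall_zero_iff, norm_mul, hnorm, mul_one, Complex.norm_real] at this
        exact abs_le.1 this
      have h2 := hcs.integral_Ioi_deriv_eq hcd 0
      have h3 : deriv (fun r : ℝ => k (r * e θ)) = fun r => A (r, θ) := by
        funext r
        have h4 : HasDerivAt (fun r : ℝ => (r : ℂ) * e θ) (e θ) r := by
          simpa using (Complex.ofRealCLM.hasDerivAt (x := r)).mul_const (e θ)
        exact ((hkd (r * e θ)).comp_hasDerivAt r h4).deriv
      rw [h3] at h2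
      simpa using h2
    simp_rw [h1]
    rw [setIntegral_const, Real.volume_real_Ioo_of_le (by linarith [Real.pi_pos]),
      Complex.real_smul]
    push_cast
    ring
  rw [← Complex.integral_comp_polarCoord_symm]
  have hpt : ∀ p ∈ Set.Ioi (0 : ℝ) ×ˢ Set.Ioo (-π) π,
      p.1 • ((Complex.polarCoord.symm p)⁻¹ * ((1 / 2 : ℂ) *
        ((fderiv ℝ k (Complex.polarCoord.symm p)) 1 +
          Complex.I • (fderiv ℝ k (Complex.polarCoord.symm p)) Complex.I))) =
      (1 / 2 : ℂ) * (A p + Complex.I * B p) := by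
    intro p hp
    have hr0 : (p.1 : ℂ) ≠ 0 := by exact_mod_cast (ne_of_gt hp.1)
    have hP : Complex.polarCoord.symm p = p.1 * e p.2 := by simp [he]
    rw [hP]
    set D := fderiv ℝ k (p.1 * e p.2) with hD
    have h1 : A p = Real.cos p.2 * D 1 + Real.sin p.2 * D Complex.I := by
      have : e p.2 = Real.cos p.2 • (1 : ℂ) + Real.sin p.2 • Complex.I := by simp [he]
      change D (e p.2) = _
      rw [this, map_add, map_smul, map_smul, Complex.real_smul, Complex.real_smul]
    have h2 : B p = - Real.sin p.2 * D 1 + Real.cos p.2 * D Complex.I := by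
      have : Complex.I * e p.2 = (- Real.sin p.2) • (1 : ℂ) + Real.cos p.2 • Complex.I := by
        simp only [he, Complex.real_smul]; push_cast
        linear_combination Complex.sin p.2 * Complex.I_sq
      change D (Complex.I * e p.2) = _
      rw [this, map_add, map_smul, map_smul, Complex.real_smul, Complex.real_smul]
      push_cast; ring
    have h3 : (e p.2)⁻¹ = Real.cos p.2 - Real.sin p.2 * Complex.I :=
      (eq_inv_of_mul_eq_one_right (hee _)).symm
    rw [h1, h2, mul_inv, h3, Complex.real_smul, smul_eq_mul, ← mul_assoc, ← mul_assoc, ← mul_assoc,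
      mul_inv_cancel₀ hr0, one_mul]
    linear_combination -(1 / 2 * Real.sin p.2 * D Complex.I) * Complex.I_sq
  have htar : polarCoord.target = Set.Ioi (0 : ℝ) ×ˢ Set.Ioo (-π) π := rfl
  rw [htar, setIntegral_congr_fun (measurableSet_Ioi.prod measurableSet_Ioo) hpt,
    integral_const_mul, integral_add hAi (hBi.const_mul _), integral_const_mul, hAint, hBint]
  ring

/-- The Cauchy transform in the first variable:
`(z₁, z₂) ↦ π⁻¹ ∫ G(z₁ - t, z₂) / t dA(t)`. The junk value `0⁻¹ = 0` at `t = 0` only affects a null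
set. -/
noncomputable def cauchyTransform (G : ℂ × ℂ → ℂ) (p : ℂ × ℂ) : ℂ :=
  (π : ℂ)⁻¹ * ∫ t : ℂ, t⁻¹ * G (p.1 - t, p.2)

theorem hasCompactSupport_slice_fst {G : ℂ × ℂ → ℂ} (hc : HasCompactSupport G) (b : ℂ) :
    HasCompactSupport (fun z => G (z, b)) :=
  HasCompactSupport.intro (hc.isCompact.image continuous_fst) fun _ hx =>
    image_eq_zero_of_notMem_tsupport fun hm => hx ⟨_, hm, rfl⟩

/-- The Cauchy transform is a convolution with the locally integrable kernel `1 / t` in which `z₂` is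
a parameter. The convolution lemmas of Mathlib put the parameter in the first coordinate, hence the
exchange of variables. -/
theorem contDiff_cauchyTransform {G : ℂ × ℂ → ℂ} (hG : ContDiff ℝ (⊤ : ℕ∞) G)
    (hc : HasCompactSupport G) : ContDiff ℝ (⊤ : ℕ∞) (cauchyTransform G) := by
  have h := contDiffOn_convolution_right_with_param (μ := (volume : Measure ℂ)) (n := ⊤)
    (ContinuousLinearMap.mul ℝ ℂ) (f := fun t : ℂ => t⁻¹) (g := fun (y x : ℂ) => G (x, y))
    (s := Set.univ) isOpen_univ (hc.isCompact.image continuous_fst)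
    (fun y x _ hx => image_eq_zero_of_notMem_tsupport fun hm => hx ⟨_, hm, rfl⟩)
    locallyIntegrable_inv (hG.comp (contDiff_snd.prodMk contDiff_fst)).contDiffOn
  rw [Set.univ_prod_univ, contDiffOn_univ] at h
  exact contDiff_const.mul (h.comp (contDiff_snd.prodMk contDiff_fst))

/-- The Cauchy transform commutes with directional derivatives, in both variables. -/
theorem fderiv_cauchyTransform {G : ℂ × ℂ → ℂ} (hG : ContDiff ℝ (⊤ : ℕ∞) G)
    (hc : HasCompactSupport G) (p v : ℂ × ℂ) :
    fderiv ℝ (cauchyTransform G) p v = cauchyTransform (fun q => fderiv ℝ G q v) p := by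
  have hsw : ContDiff ℝ (⊤ : ℕ∞) (fun q : ℂ × ℂ => G (q.2, q.1)) :=
    hG.comp (contDiff_snd.prodMk contDiff_fst)
  have h := hasFDerivAt_convolution_right_with_param (μ := (volume : Measure ℂ))
    (ContinuousLinearMap.mul ℝ ℂ) (f := fun t : ℂ => t⁻¹) (g := fun (y x : ℂ) => G (x, y))
    (s := Set.univ) isOpen_univ (hc.isCompact.image continuous_fst)
    (fun y x _ hx => image_eq_zero_of_notMem_tsupport fun hm => hx ⟨_, hm, rfl⟩)
    locallyIntegrable_inv (hsw.of_le (by exact_mod_cast le_top)).contDiffOn (p.2, p.1) trivial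
  have hswc : HasCompactSupport (fun q : ℂ × ℂ => G (q.2, q.1)) :=
    hc.comp_homeomorph (Homeomorph.prodComm ℂ ℂ)
  have hDc : HasCompactSupport (fun x : ℂ => fderiv ℝ (fun q : ℂ × ℂ => G (q.2, q.1)) (p.2, x)) :=
    HasCompactSupport.intro ((hswc.fderiv ℝ).isCompact.image continuous_snd) fun _ hx =>
      image_eq_zero_of_notMem_tsupport fun hm => hx ⟨_, hm, rfl⟩
  have hDcont : Continuous (fun x : ℂ => fderiv ℝ (fun q : ℂ × ℂ => G (q.2, q.1)) (p.2, x)) :=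
    (hsw.continuous_fderiv (by simp)).comp (by fun_prop)
  have hconv := hDc.convolutionExists_right ((ContinuousLinearMap.mul ℝ ℂ).precompR (ℂ × ℂ))
    locallyIntegrable_inv hDcont p.1
  have hswp : HasFDerivAt (fun q : ℂ × ℂ => (q.2, q.1))
      ((ContinuousLinearMap.snd ℝ ℂ ℂ).prod (ContinuousLinearMap.fst ℝ ℂ ℂ)) p :=
    hasFDerivAt_snd.prodMk hasFDerivAt_fst
  have h2 : HasFDerivAt (cauchyTransform G) _ p := (h.comp p hswp).const_mul ((π : ℂ)⁻¹)
  rw [h2.fderiv, _root_.smul_apply, ContinuousLinearMap.comp_apply, smul_eq_mul,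
    cauchyTransform]
  congr 1
  unfold convolution
  refine (ContinuousLinearMap.integral_apply hconv _).trans ?_
  refine integral_congr_ae (Filter.Eventually.of_forall fun t => ?_)
  have h3 : HasFDerivAt (fun q : ℂ × ℂ => G (q.2, q.1)) _ (p.2, p.1 - t) :=
    ((hG.differentiable (by simp) (p.1 - t, p.2)).hasFDerivAt).comp (p.2, p.1 - t)
      (hasFDerivAt_snd.prodMk hasFDerivAt_fst)
  change t⁻¹ * (fderiv ℝ (fun q : ℂ × ℂ => G (q.2, q.1)) (p.2, p.1 - t)) (v.2, v.1) = _
  rw [h3.fderiv]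
  simp

theorem dbar1_eq {f : ℂ × ℂ → ℂ} (hf : Differentiable ℝ f) (p : ℂ × ℂ) :
    dbar1 f p = (1 / 2 : ℂ) * (fderiv ℝ f p (1, 0) + Complex.I * fderiv ℝ f p (Complex.I, 0)) := by
  have h : HasFDerivAt (fun w => f (w, p.2)) _ p.1 :=
    (hf (p.1, p.2)).hasFDerivAt.comp p.1 (hasFDerivAt_prodMk_left p.1 p.2)
  rw [dbar1, h.fderiv]
  simp

theorem dbar2_eq {f : ℂ × ℂ → ℂ} (hf : Differentiable ℝ f) (p : ℂ × ℂ) :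
    dbar2 f p = (1 / 2 : ℂ) * (fderiv ℝ f p (0, 1) + Complex.I * fderiv ℝ f p (0, Complex.I)) := by
  have h : HasFDerivAt (fun w => f (p.1, w)) _ p.2 :=
    (hf (p.1, p.2)).hasFDerivAt.comp p.2 (hasFDerivAt_prodMk_right p.1 p.2)
  rw [dbar2, h.fderiv]
  simp

theorem integrable_inv_mul {G : ℂ × ℂ → ℂ} (hG : Continuous G) (hc : HasCompactSupport G)
    (p : ℂ × ℂ) : Integrable (fun t : ℂ => t⁻¹ * G (p.1 - t, p.2)) :=
  (hasCompactSupport_slice_fst hc p.2).convolutionExists_right (ContinuousLinearMap.mul ℝ ℂ)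
    locallyIntegrable_inv (hG.comp (by fun_prop)) p.1

theorem cauchyTransform_lincomb {G H : ℂ × ℂ → ℂ} (hG : Continuous G) (hGc : HasCompactSupport G)
    (hH : Continuous H) (hHc : HasCompactSupport H) (p : ℂ × ℂ) :
    (1 / 2 : ℂ) * (cauchyTransform G p + Complex.I * cauchyTransform H p) =
      cauchyTransform (fun q => (1 / 2 : ℂ) * (G q + Complex.I * H q)) p := by
  simp only [cauchyTransform]
  have : ∀ t : ℂ, t⁻¹ * ((1 / 2 : ℂ) * (G (p.1 - t, p.2) + Complex.I * H (p.1 - t, p.2))) =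
      (1 / 2 : ℂ) * (t⁻¹ * G (p.1 - t, p.2) + Complex.I * (t⁻¹ * H (p.1 - t, p.2))) :=
    fun t => by ring
  simp_rw [this]
  rw [integral_const_mul, integral_add (integrable_inv_mul hG hGc p)
    ((integrable_inv_mul hH hHc p).const_mul _), integral_const_mul]
  ring

theorem dbar1_cauchyTransform {G : ℂ × ℂ → ℂ} (hG : ContDiff ℝ (⊤ : ℕ∞) G)
    (hc : HasCompactSupport G) (p : ℂ × ℂ) :
    dbar1 (cauchyTransform G) p = cauchyTransform (dbar1 G) p := by
  have hv : ∀ v : ℂ × ℂ, Continuous (fun q => fderiv ℝ G q v) := fun v =>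
    (hG.continuous_fderiv (by simp)).clm_apply continuous_const
  rw [dbar1_eq ((contDiff_cauchyTransform hG hc).differentiable (by simp)),
    fderiv_cauchyTransform hG hc, fderiv_cauchyTransform hG hc,
    cauchyTransform_lincomb (hv _) (hc.fderiv_apply ℝ _) (hv _) (hc.fderiv_apply ℝ _)]
  congr 1
  funext q
  exact (dbar1_eq (hG.differentiable (by simp)) q).symm

theorem dbar2_cauchyTransform {G : ℂ × ℂ → ℂ} (hG : ContDiff ℝ (⊤ : ℕ∞) G)
    (hc : HasCompactSupport G) (p : ℂ × ℂ) :
    dbar2 (cauchyTransform G) p = cauchyTransform (dbar2 G) p := by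
  have hv : ∀ v : ℂ × ℂ, Continuous (fun q => fderiv ℝ G q v) := fun v =>
    (hG.continuous_fderiv (by simp)).clm_apply continuous_const
  rw [dbar2_eq ((contDiff_cauchyTransform hG hc).differentiable (by simp)),
    fderiv_cauchyTransform hG hc, fderiv_cauchyTransform hG hc,
    cauchyTransform_lincomb (hv _) (hc.fderiv_apply ℝ _) (hv _) (hc.fderiv_apply ℝ _)]
  congr 1
  funext q
  exact (dbar2_eq (hG.differentiable (by simp)) q).symm

/-- The Cauchy–Pompeiu formula: a compactly supported smooth function is the Cauchy transform of its
`∂̄₁`-derivative. It is `integral_inv_mul_dbar` applied to `t ↦ G(z₁ - t, z₂)`; the reflection turns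
`-π` into `π`. -/
theorem cauchyTransform_dbar1 {G : ℂ × ℂ → ℂ} (hG : ContDiff ℝ (⊤ : ℕ∞) G)
    (hc : HasCompactSupport G) (p : ℂ × ℂ) :
    cauchyTransform (dbar1 G) p = G p := by
  have hsl : ContDiff ℝ (⊤ : ℕ∞) (fun w => G (w, p.2)) := hG.comp (contDiff_prodMk_left p.2)
  have hk : ContDiff ℝ (⊤ : ℕ∞) (fun t => G (p.1 - t, p.2)) :=
    hsl.comp (contDiff_const.sub contDiff_id)
  have hkc : HasCompactSupport (fun t => G (p.1 - t, p.2)) :=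
    (hasCompactSupport_slice_fst hc p.2).comp_homeomorph (Homeomorph.subLeft p.1)
  have h := integral_inv_mul_dbar (hk.of_le (by exact_mod_cast le_top)) hkc
  have hder : ∀ t v, fderiv ℝ (fun t => G (p.1 - t, p.2)) t v =
      - fderiv ℝ (fun w => G (w, p.2)) (p.1 - t) v := by
    intro t v
    have h1 : HasFDerivAt (fun t => G (p.1 - t, p.2)) _ t :=
      ((hsl.differentiable (by simp) (p.1 - t)).hasFDerivAt).comp t
        ((hasFDerivAt_id t).const_sub p.1)
    rw [h1.fderiv]
    simp
  have hpi : (π : ℂ) ≠ 0 := by exact_mod_cast Real.pi_ne_zero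
  have h2 : ∀ t : ℂ, t⁻¹ * dbar1 G (p.1 - t, p.2) =
      -(t⁻¹ * ((1 / 2 : ℂ) * ((fderiv ℝ (fun t => G (p.1 - t, p.2)) t) 1 +
        Complex.I • (fderiv ℝ (fun t => G (p.1 - t, p.2)) t) Complex.I))) := by
    intro t
    rw [hder, hder, dbar1]
    simp only [smul_eq_mul]
    ring
  rw [cauchyTransform]
  simp_rw [h2]
  rw [integral_neg, h]
  simp only [sub_zero]
  field_simp

/-- For a `∂̄`-closed smooth compactly supported `(0,1)`-form `g₁ dz̄₁ + g₂ dz̄₂` on `ℂ²`,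
there is a unique smooth compactly supported `f` with `∂̄f = g₁ dz̄₁ + g₂ dz̄₂`.
Existence is `H¹_c(ℂ², 𝒪) = 0` and uniqueness is `H⁰_c(ℂ², 𝒪) = 0`. -/
theorem dbar_C2_existsUnique_compact_support
    (g₁ g₂ : ℂ × ℂ → ℂ)
    (hg₁ : ContDiff ℝ (⊤ : ℕ∞) g₁) (hg₁c : HasCompactSupport g₁)
    (hg₂ : ContDiff ℝ (⊤ : ℕ∞) g₂) (hg₂c : HasCompactSupport g₂)
    (hclosed : ∀ p : ℂ × ℂ, dbar2 g₁ p = dbar1 g₂ p) :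
    ∃! f : ℂ × ℂ → ℂ, ContDiff ℝ (⊤ : ℕ∞) f ∧ HasCompactSupport f ∧
      ∀ p : ℂ × ℂ, dbar1 f p = g₁ p ∧ dbar2 f p = g₂ p := by
  have diff : ∀ {u : ℂ × ℂ → ℂ}, ContDiff ℝ (⊤ : ℕ∞) u → Differentiable ℝ u := fun h =>
    h.differentiable (by simp)
  refine ⟨cauchyTransform g₁, ⟨contDiff_cauchyTransform hg₁ hg₁c, ?_, ?_⟩, ?_⟩
  · have hs := contDiff_cauchyTransform hg₁ hg₁c
    refine HasCompactSupport.intro ((hg₂c.isCompact.image continuous_fst).prod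
      (hg₁c.isCompact.image continuous_snd)) ?_
    -- If `z₂` is outside the projection of the support of `g₁`, the integrand vanishes.
    have hz₂ : ∀ a b : ℂ, b ∉ Prod.snd '' tsupport g₁ → cauchyTransform g₁ (a, b) = 0 := by
      intro a b hb
      have : ∀ x, g₁ (x, b) = 0 := fun x =>
        image_eq_zero_of_notMem_tsupport fun hm => hb ⟨_, hm, rfl⟩
      simp [cauchyTransform, this]
    rintro ⟨a, b⟩ hab
    by_cases hb : b ∈ Prod.snd '' tsupport g₁
    -- Otherwise `z₁ = a` is outside the projection of the support of `g₂`, so the transform is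
    -- holomorphic in `z₂` on this slice, with compact support there.
    · have ha : a ∉ Prod.fst '' tsupport g₂ := fun ha => hab ⟨ha, hb⟩
      refine eq_zero_of_entire_of_compactSupport (h := fun w => cauchyTransform g₁ (a, w))
        ((diff hs).comp (by fun_prop)) (HasCompactSupport.intro
          (hg₁c.isCompact.image continuous_snd) (hz₂ a)) (fun w => ?_) b
      have h1 : dbar2 (cauchyTransform g₁) (a, w) = g₂ (a, w) := by
        rw [dbar2_cauchyTransform hg₁ hg₁c, funext hclosed, cauchyTransform_dbar1 hg₂ hg₂c]
      refine h1.trans ?_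
      exact image_eq_zero_of_notMem_tsupport fun hm => ha ⟨_, hm, rfl⟩
    · exact hz₂ a b hb
  · intro p
    rw [dbar1_cauchyTransform hg₁ hg₁c, cauchyTransform_dbar1 hg₁ hg₁c,
      dbar2_cauchyTransform hg₁ hg₁c, funext hclosed, cauchyTransform_dbar1 hg₂ hg₂c]
    exact ⟨rfl, rfl⟩
  · rintro u ⟨hu, huc, hub⟩
    -- By the Cauchy–Pompeiu formula, `u` is determined by `∂̄₁u = g₁`.
    funext p
    rw [← cauchyTransform_dbar1 hu huc p, funext fun q => (hub q).1]
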